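/- For every ν ∈ F_{C_n} and every formula α: if ν(α) ∈ D_n then ν(∼α) = F_n, and if ν(α) = F_n then ν(∼α) = T_n, where ∼α := ¬α ∧ α^{(n)} is the strong negation. Consequently ν(α ∧ ∼α) = F_n and ν(α ∨ ∼α) ∈ D_n for every formula α. -/

import Mathlib

/-- Formulas over the signature Σ (¬ unary; ∧, ∨, → binary). -/
inductive PFs : Type
  | var : ℕ → PFs
  | neg : PFs → PFs
  | and : PFs → PFs → PFs
  | or : PFs → PFs → PFs
  | imp : PFs → PFs → PFs

/-- `pw α k` is `α^k`: `α^0 = α` and `α^{j+1} = ¬(α^j ∧ ¬(α^j))`. -/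
def pw (α : PFs) : ℕ → PFs
  | 0 => α
  | k + 1 => PFs.neg ((pw α k).and (PFs.neg (pw α k)))

/-- Snapshots for `C_n`: `(n+1)`-tuples over `2` with at most one coordinate
equal to `0` (i.e. `false`). -/
def Snap (n : ℕ) : Type :=
  {z : Fin (n + 1) → Bool // ∀ i j : Fin (n + 1), z i = false → z j = false → i = j}

/-- `T_n = (1,0,1,…,1)`. -/
def Tval (n : ℕ) : Snap n :=
  ⟨fun i => decide ((i : ℕ) ≠ 1), by
    intro i j hi hj
    simp only [decide_eq_false_iff_not, not_not] at hi hj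
    exact Fin.ext (hi.trans hj.symm)⟩

/-- `F_n = (0,1,1,…,1)`. -/
def Fval (n : ℕ) : Snap n :=
  ⟨fun i => decide ((i : ℕ) ≠ 0), by
    intro i j hi hj
    simp only [decide_eq_false_iff_not, not_not] at hi hj
    exact Fin.ext (hi.trans hj.symm)⟩

/-- `t^n_i`: all coordinates `1` except (when it exists) the one in position
`i+3`, i.e. index `i+2`; for `i = n-1` all coordinates equal `1`. -/
def tval (n i : ℕ) : Snap n :=
  ⟨fun j => decide ((j : ℕ) ≠ i + 2), by
    intro j j' hj hj'
    simp only [decide_eq_false_iff_not, not_not] at hj hj'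
    exact Fin.ext (hj.trans hj'.symm)⟩

/-- Designated values `D_n = B_n \ {F_n} = {z : z₁ = 1}`. -/
def Dn (n : ℕ) : Set (Snap n) := {z | z.1 0 = true}

/-- Boolean values `Boo_n = {z : z₁ ∧ z₂ = 0}`. -/
def BooN (n : ℕ) : Set (Snap n) := {z | (z.1 0 && z.1 1) = false}

/-- Inconsistent values `I_n = B_n \ {T_n, F_n}`. -/
def InN (n : ℕ) : Set (Snap n) := {z | z ≠ Tval n ∧ z ≠ Fval n}

/-- `¬̃ z = {w : w₁ = z₂ and w₂ ≤ z₁}`. -/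
def negN {n : ℕ} (z : Snap n) : Set (Snap n) :=
  {w | w.1 0 = z.1 1 ∧ (w.1 1 = true → z.1 0 = true)}

open Classical in
/-- `z #̃ w`: Boolean (inside `Boo_n`) when both arguments are Boolean values,
non-deterministic (first coordinate determined classically) otherwise. -/
noncomputable def binN {n : ℕ} (f : Bool → Bool → Bool) (z w : Snap n) :
    Set (Snap n) :=
  if z ∈ BooN n ∧ w ∈ BooN n then
    {u | u ∈ BooN n ∧ u.1 0 = f (z.1 0) (w.1 0)}
  else
    {u | u.1 0 = f (z.1 0) (w.1 0)}

/-- `ν` is a multialgebra homomorphism into `A_{C_n}`. -/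
def IsHomN (n : ℕ) (ν : PFs → Snap n) : Prop :=
  (∀ α, ν (PFs.neg α) ∈ negN (ν α)) ∧
  (∀ α β, ν (PFs.and α β) ∈ binN (· && ·) (ν α) (ν β)) ∧
  (∀ α β, ν (PFs.or α β) ∈ binN (· || ·) (ν α) (ν β)) ∧
  (∀ α β, ν (PFs.imp α β) ∈ binN (fun a b => !a || b) (ν α) (ν β))

/-- `ν ∈ F_{C_n}`: a homomorphism satisfying the restrictions on valuations. -/
def FCn (n : ℕ) (ν : PFs → Snap n) : Prop :=
  IsHomN n ν ∧
  (∀ α, ν α = tval n 0 → ν (PFs.and α (PFs.neg α)) = Tval n) ∧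
  (∀ α k, 1 ≤ k → k ≤ n - 1 → ν α = tval n k →
    ν (PFs.and α (PFs.neg α)) ∈ InN n ∧ ν (pw α 1) = tval n (k - 1))

/-- `pc α j` is `α^{(j)}`: `α^{(1)} = α^1` and `α^{(j+1)} = α^{(j)} ∧ α^{j+1}`
(with the convention `α^{(0)} = α`). -/
def pc (α : PFs) : ℕ → PFs
  | 0 => α
  | 1 => pw α 1
  | j + 2 => (pc α (j + 1)).and (pw α (j + 2))

/-- The strong negation `∼α := ¬α ∧ α^{(n)}`. -/
def sneg (n : ℕ) (α : PFs) : PFs := (PFs.neg α).and (pc α n)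

theorem aux_fst {m : ℕ} (f : Bool → Bool → Bool) {z w u : Snap m} (h : u ∈ binN f z w) :
    u.1 0 = f (z.1 0) (w.1 0) := by
  unfold binN at h
  split_ifs at h
  · exact h.2
  · exact h

theorem aux_single {m : ℕ} (z : Snap m) (i : Fin (m + 1)) (h : z.1 i = false) (w : Snap m)
    (hw : ∀ j, w.1 j = decide ((j : ℕ) ≠ (i : ℕ))) : z = w := by
  apply Subtype.ext
  funext j
  rw [hw]
  by_cases hj : j = i
  · subst hj; simp [h]
  · have h1 : (j : ℕ) ≠ i := fun h => hj (Fin.ext h)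
    rw [decide_eq_true h1]
    cases hz : z.1 j
    · exact absurd (z.2 _ _ hz h) hj
    · rfl

theorem aux_F {m : ℕ} (z : Snap m) (h : z.1 0 = false) : z = Fval m :=
  aux_single z 0 h _ fun j => by simp [Fval]

theorem aux_T {m : ℕ} (z : Snap (m + 2)) (h : z.1 1 = false) : z = Tval (m + 2) :=
  aux_single z 1 h _ fun j => by simp [Tval]

theorem aux_t {m : ℕ} (z : Snap (m + 2)) (h0 : z.1 0 = true) (h1 : z.1 1 = true) :
    ∃ k, k ≤ m + 1 ∧ z = tval (m + 2) k := by
  by_cases h : ∃ i, z.1 i = false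
  · obtain ⟨i, hi⟩ := h
    have hi0 : (i : ℕ) ≠ 0 := by
      intro h
      have : i = 0 := Fin.ext (by simpa using h)
      simp_all
    have hi1 : (i : ℕ) ≠ 1 := by
      intro h
      have : i = 1 := Fin.ext (by simpa using h)
      simp_all
    refine ⟨i - 2, by omega, aux_single z i hi _ fun j => ?_⟩
    have : (i : ℕ) - 2 + 2 = i := by omega
    simp [tval, this]
  · refine ⟨m + 1, le_rfl, Subtype.ext (funext fun j => ?_)⟩
    have hj : z.1 j = true := by
      cases hz : z.1 j
      · exact absurd ⟨j, hz⟩ h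
      · rfl
    have : (j : ℕ) ≠ m + 1 + 2 := by omega
    rw [hj]
    exact (decide_eq_true this).symm

theorem aux_shift (β : PFs) (k : ℕ) : pw β (k + 1) = pw (pw β 1) k := by
  induction k with
  | zero => rfl
  | succ k ih =>
    have h1 : pw β (k + 1 + 1) = PFs.neg ((pw β (k + 1)).and (PFs.neg (pw β (k + 1)))) := rfl
    rw [h1, ih]; rfl

theorem aux_down {m : ℕ} (ν : PFs → Snap (m + 2)) (hν : FCn (m + 2) ν) (k : ℕ) :
    ∀ β, k ≤ m + 1 → ν β = tval (m + 2) k → (ν (pw β (k + 1))).1 0 = false := by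
  induction k with
  | zero =>
    intro β _ h
    have h1 := hν.2.1 β h
    have h2 := (hν.1.1 (β.and β.neg)).1
    rw [h1] at h2
    change (ν ((β.and β.neg).neg)).1 0 = false
    rw [h2]; simp [Tval]
  | succ k ih =>
    intro β hk h
    rw [aux_shift]
    exact ih _ (by omega) (hν.2.2 β (k + 1) (by omega) (by omega) h).2

theorem aux_pc {m : ℕ} (ν : PFs → Snap m) (hν : FCn m ν) (α : PFs) (j N : ℕ)
    (hj : (ν (pw α (j + 1))).1 0 = false) (hN : j ≤ N) : (ν (pc α (N + 1))).1 0 = false := by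
  induction N with
  | zero =>
    obtain rfl : j = 0 := by omega
    exact hj
  | succ N ih =>
    have h := aux_fst _ (hν.1.2.1 (pc α (N + 1)) (pw α (N + 2)))
    change (ν ((pc α (N + 1)).and (pw α (N + 2)))).1 0 = false
    rw [h]
    rcases Nat.lt_or_ge N j with hlt | hge
    · obtain rfl : j = N + 1 := by omega
      simp [hj]
    · simp [ih hge]

theorem aux_neg {m : ℕ} (ν : PFs → Snap (m + 2)) (hν : FCn (m + 2) ν) (β : PFs) :
    (ν β = Fval _ → ν β.neg = Tval _) ∧ (ν β = Tval _ → ν β.neg = Fval _) := by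
  have h := hν.1.1 β
  constructor
  · intro hb
    apply aux_T
    have h2 := h.2
    rw [hb] at h2
    cases hz : (ν β.neg).1 1
    · rfl
    · simpa [Fval] using h2 hz
  · intro hb
    apply aux_F
    rw [h.1, hb]; simp [Tval]

theorem aux_andT {m : ℕ} (ν : PFs → Snap (m + 2)) (hν : FCn (m + 2) ν) (β γ : PFs)
    (hb : ν β = Tval _) (hc : ν γ = Tval _) : ν (β.and γ) = Tval _ := by
  have h := hν.1.2.1 β γ
  have hB : Tval (m + 2) ∈ BooN (m + 2) := by
    change ((Tval (m + 2)).1 0 && (Tval (m + 2)).1 1) = false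
    simp [Tval]
  rw [hb, hc] at h
  unfold binN at h
  rw [if_pos ⟨hB, hB⟩] at h
  obtain ⟨h1, h2⟩ := h
  apply aux_T
  have h3 : (ν (β.and γ)).1 0 = true := by rw [h2]; simp [Tval]
  have h4 : ((ν (β.and γ)).1 0 && (ν (β.and γ)).1 1) = false := h1
  simpa [h3] using h4

theorem aux_pwT {m : ℕ} (ν : PFs → Snap (m + 2)) (hν : FCn (m + 2) ν) (α : PFs)
    (h : ν α = Fval _) (k : ℕ) : ν (pw α (k + 1)) = Tval _ := by
  have key : ∀ β, (ν β = Fval _ ∨ ν β = Tval _) → ν ((β.and β.neg).neg) = Tval _ := by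
    intro β hb
    apply (aux_neg ν hν _).1
    apply aux_F
    rw [aux_fst _ (hν.1.2.1 β β.neg)]
    rcases hb with hb | hb
    · simp [hb, Fval]
    · simp [(aux_neg ν hν β).2 hb, Fval]
  induction k with
  | zero => exact key α (Or.inl h)
  | succ k ih => exact key _ (Or.inr ih)

theorem aux_pcT {m : ℕ} (ν : PFs → Snap (m + 2)) (hν : FCn (m + 2) ν) (α : PFs)
    (h : ν α = Fval _) (k : ℕ) : ν (pc α (k + 1)) = Tval _ := by
  induction k with
  | zero => exact aux_pwT ν hν α h 0
  | succ k ih => exact aux_andT ν hν _ _ ih (aux_pwT ν hν α h (k + 1))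

/-- for every `ν ∈ F_{C_n}` and formula `α`: if `ν(α) ∈ D_n`
then `ν(∼α) = F_n`, and if `ν(α) = F_n` then `ν(∼α) = T_n`; consequently
`ν(α ∧ ∼α) = F_n` and `ν(α ∨ ∼α) ∈ D_n`. -/
theorem stmt_11 (n : ℕ) (hn : 2 ≤ n) (ν : PFs → Snap n) (hν : FCn n ν)
    (α : PFs) :
    (ν α ∈ Dn n → ν (sneg n α) = Fval n) ∧
    (ν α = Fval n → ν (sneg n α) = Tval n) ∧
    (ν (α.and (sneg n α)) = Fval n) ∧
    (ν (α.or (sneg n α)) ∈ Dn n) := by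
  obtain ⟨m, rfl⟩ : ∃ m, n = m + 2 := ⟨n - 2, by omega⟩
  have A : ν α ∈ Dn (m + 2) → ν (sneg (m + 2) α) = Fval (m + 2) := by
    intro h0
    have h0' : (ν α).1 0 = true := h0
    apply aux_F
    have hs := aux_fst _ (hν.1.2.1 α.neg (pc α (m + 2)))
    change (ν (α.neg.and (pc α (m + 2)))).1 0 = false
    rw [hs]
    cases h1 : (ν α).1 1
    · have := (hν.1.1 α).1
      rw [h1] at this
      simp [this]
    · obtain ⟨k, hk, ht⟩ := aux_t _ h0' h1
      have := aux_pc ν hν α k (m + 1) (aux_down ν hν k α hk ht) hk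
      simp [this]
  have B : ν α = Fval (m + 2) → ν (sneg (m + 2) α) = Tval (m + 2) := fun h =>
    aux_andT ν hν _ _ ((aux_neg ν hν α).1 h) (aux_pcT ν hν α h (m + 1))
  refine ⟨A, B, ?_, ?_⟩
  · apply aux_F
    rw [aux_fst _ (hν.1.2.1 α (sneg (m + 2) α))]
    cases h0 : (ν α).1 0
    · simp
    · simp [A h0, Fval]
  · change (ν (α.or (sneg (m + 2) α))).1 0 = true
    rw [aux_fst _ (hν.1.2.2.1 α (sneg (m + 2) α))]
    cases h0 : (ν α).1 0
    · simp [B (aux_F _ h0), Tval]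
    · simp
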